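/- Let n ≥ 2, let T_E be the n×n tridiagonal matrix with diagonal entries (3,2,…,2,3) and −1 on the sub- and super-diagonal, and let B_D be the n×(n−1) matrix with (B_D)_{i,i} = −1 and (B_D)_{i+1,i} = 1 for 1 ≤ i ≤ n−1 and all other entries 0. Then T_E is symmetric positive definite and the (n−1)×(n−1) matrix I_{n−1} − B_Dᵀ·T_E⁻¹·B_D is symmetric positive semidefinite. -/

import Mathlib

/-!
The matrix `B_D B_Dᵀ` is the one-dimensional Neumann Laplacian, with diagonal `(1, 2, …, 2, 1)`, so
`T_E = B_D B_Dᵀ + D` with `D = diag(2, 0, …, 0, 2) ≥ 0` (`TE_eq`). Hence `xᵀ T_E x` is a sum of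
squares; it vanishes only when the consecutive differences `B_Dᵀ x` and the end entry `x₀` vanish,
that is, when `x = 0`. Semidefiniteness of `I - B_Dᵀ T_E⁻¹ B_D` follows by taking both Schur
complements of the block matrix `[[T_E, B_D], [B_Dᵀ, I]]`: it is semidefinite because
`T_E - B_D I⁻¹ B_Dᵀ = D` is.
-/

open Matrix

/-- `n×n` tridiagonal matrix with diagonal `(3,2,…,2,3)` and `-1` on the sub/super-diagonal. -/
noncomputable def TE (n : ℕ) : Matrix (Fin n) (Fin n) ℝ := fun i j =>
  if i = j then (if (i : ℕ) = 0 ∨ (i : ℕ) = n - 1 then 3 else 2)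
  else if (i : ℕ) + 1 = (j : ℕ) ∨ (j : ℕ) + 1 = (i : ℕ) then -1 else 0

/-- `n×(n-1)` bidiagonal matrix with `(B_D)_{i,i} = -1`, `(B_D)_{i+1,i} = 1`. -/
noncomputable def BD (n : ℕ) : Matrix (Fin n) (Fin (n - 1)) ℝ := fun i j =>
  if (i : ℕ) = (j : ℕ) then -1 else if (i : ℕ) = (j : ℕ) + 1 then 1 else 0

/-- The diagonal of `T_E - B_D B_Dᵀ`, namely `(2, 0, …, 0, 2)`. -/
noncomputable def endDiag (n : ℕ) : Fin n → ℝ := fun i =>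
  if (i : ℕ) = 0 ∨ (i : ℕ) = n - 1 then 2 else 0

/-- The entry at `(i, j)` of `B_D B_Dᵀ` when `B_D` has `k` columns and rows are indexed from `0`; the
product of the two row entries is written out so that induction on `k` applies. -/
lemma sum_bidiag (i j k : ℕ) :
    (∑ l ∈ Finset.range k,
      (if i = l then (-1 : ℝ) else if i = l + 1 then 1 else 0) *
        (if j = l then (-1 : ℝ) else if j = l + 1 then 1 else 0)) =
      if i = j then (if i < k then 1 else 0) + (if 1 ≤ i ∧ i ≤ k then 1 else 0)
      else if (i + 1 = j ∧ i < k) ∨ (j + 1 = i ∧ j < k) then -1 else 0 := by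
  induction k with
  | zero => simp; intros; omega
  | succ k ih =>
    rw [Finset.sum_range_succ, ih]
    grind

lemma TE_eq (n : ℕ) (hn : 2 ≤ n) : TE n = BD n * (BD n)ᵀ + diagonal (endDiag n) := by
  ext i j
  have h := sum_bidiag i j (n - 1)
  rw [← Fin.sum_univ_eq_sum_range (fun l =>
      (if (i : ℕ) = l then (-1 : ℝ) else if (i : ℕ) = l + 1 then 1 else 0) *
        (if (j : ℕ) = l then (-1 : ℝ) else if (j : ℕ) = l + 1 then 1 else 0))] at h
  have hi := i.isLt
  have hj := j.isLt
  simp only [Matrix.add_apply, Matrix.mul_apply, Matrix.transpose_apply, BD, TE, diagonal_apply,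
    endDiag, h, Fin.ext_iff]
  grind

lemma BD_transpose_mulVec (n : ℕ) (x : Fin n → ℝ) (l : Fin (n - 1)) :
    ((BD n)ᵀ *ᵥ x) l = x ⟨l + 1, by omega⟩ - x ⟨l, by omega⟩ := by
  have h (i : Fin n) : (BD n)ᵀ l i * x i =
      (if i = ⟨l + 1, by omega⟩ then x i else 0) - (if i = ⟨l, by omega⟩ then x i else 0) := by
    simp only [Matrix.transpose_apply, BD, Fin.ext_iff]
    grind
  simp only [mulVec, dotProduct, h, Finset.sum_sub_distrib, Finset.sum_ite_eq',
    Finset.mem_univ, if_true]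

lemma endDiag_posSemidef (n : ℕ) : (diagonal (endDiag n)).PosSemidef :=
  .diagonal fun i => by
    simp only [endDiag, Pi.zero_apply]
    split_ifs <;> norm_num

lemma TE_posDef (n : ℕ) (hn : 2 ≤ n) : (TE n).PosDef := by
  have hB : (BD n * (BD n)ᵀ).PosSemidef := by
    simpa using posSemidef_self_mul_conjTranspose (BD n)
  have hT : (TE n).PosSemidef := TE_eq n hn ▸ hB.add (endDiag_posSemidef n)
  refine .of_dotProduct_mulVec_pos hT.isHermitian fun x hx => ?_
  refine lt_of_le_of_ne (hT.dotProduct_mulVec_nonneg x) fun h0 => hx ?_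
  have hBx := hB.dotProduct_mulVec_nonneg x
  have hDx := (endDiag_posSemidef n).dotProduct_mulVec_nonneg x
  rw [TE_eq n hn, add_mulVec, dotProduct_add] at h0
  have hBx0 : (BD n)ᵀ *ᵥ x = 0 := by
    rw [← dotProduct_self_eq_zero, mulVec_transpose, ← dotProduct_mulVec, ← mulVec_transpose,
      mulVec_mulVec]
    simp only [star_trivial] at *
    linarith
  have hDx0 : x ⬝ᵥ (diagonal (endDiag n) *ᵥ x) = 0 := by
    simp only [star_trivial] at *
    linarith
  have hx0 : x ⟨0, by omega⟩ = 0 := by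
    simp only [dotProduct, mulVec_diagonal] at hDx0
    rw [Finset.sum_eq_zero_iff_of_nonneg] at hDx0
    · simpa [endDiag] using hDx0 ⟨0, by omega⟩ (Finset.mem_univ _)
    · intro i _
      simp only [endDiag]
      split_ifs <;> nlinarith [mul_self_nonneg (x i)]
  have key : ∀ m (hm : m < n), x ⟨m, hm⟩ = 0 := by
    intro m
    induction m with
    | zero => exact fun _ => hx0
    | succ m ih =>
      intro hm
      have h := BD_transpose_mulVec n x ⟨m, by omega⟩
      rw [hBx0, Pi.zero_apply, ih (by omega)] at h
      simpa using h.symm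
  exact funext fun i => key i i.isLt

/-- `T_E` is symmetric positive definite and
`I_{n-1} - B_Dᵀ T_E⁻¹ B_D` is symmetric positive semidefinite. -/
theorem stmt_16 (n : ℕ) (hn : 2 ≤ n) :
    (TE n).PosDef ∧ ((1 : Matrix (Fin (n - 1)) (Fin (n - 1)) ℝ) - (BD n)ᵀ * (TE n)⁻¹ * BD n).PosSemidef := by
  have hT := TE_posDef n hn
  refine ⟨hT, ?_⟩
  have := hT.isUnit.invertible
  have := invertibleOne (α := Matrix (Fin (n - 1)) (Fin (n - 1)) ℝ)
  have h₁ := PosDef.fromBlocks₁₁ (BD n) 1 hT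
  have h₂ := PosDef.fromBlocks₂₂ (TE n) (BD n) (D := 1) .one
  rw [conjTranspose_eq_transpose_of_trivial] at h₁ h₂
  rw [← h₁, h₂, inv_one, Matrix.mul_one, TE_eq n hn, add_sub_cancel_left]
  exact endDiag_posSemidef n
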